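/- Every finite-dimensional associative algebra over a field that is not nilpotent (i.e., no power of the algebra is zero) contains a nonzero idempotent element. -/

import Mathlib

/-- `subPow K I n` is the submodule `I^(n+1)`: span of products of `n+1` elements of `I`. -/
def subPow (K : Type*) {A : Type*} [Field K] [NonUnitalRing A] [Module K A]
    [SMulCommClass K A A] [IsScalarTower K A A] (I : Submodule K A) : ℕ → Submodule K A
  | 0 => I
  | n + 1 => Submodule.map₂ (LinearMap.mul K A) (subPow K I n) I

/-- auxiliary product of submodules -/
abbrev smP (K : Type*) {A : Type*} [Field K] [NonUnitalRing A] [Module K A]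
    [SMulCommClass K A A] [IsScalarTower K A A] (I J : Submodule K A) : Submodule K A :=
  Submodule.map₂ (LinearMap.mul K A) I J

section aux
variable {K A : Type*} [Field K] [NonUnitalRing A] [Module K A]
    [SMulCommClass K A A] [IsScalarTower K A A]

theorem smP_mem {I J : Submodule K A} {x y : A} (hx : x ∈ I) (hy : y ∈ J) : x * y ∈ smP K I J :=
  Submodule.apply_mem_map₂ (LinearMap.mul K A) hx hy

theorem smP_assoc (I J L : Submodule K A) : smP K (smP K I J) L = smP K I (smP K J L) := by
  apply le_antisymm
  · refine Submodule.map₂_le.2 fun x hx z hz => ?_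
    have : smP K I J ≤ (smP K I (smP K J L)).comap ((LinearMap.mul K A).flip z) := by
      refine Submodule.map₂_le.2 fun p hp q hq => ?_
      simpa [mul_assoc] using smP_mem hp (smP_mem hq hz)
    exact this hx
  · refine Submodule.map₂_le.2 fun x hx z hz => ?_
    have : smP K J L ≤ (smP K (smP K I J) L).comap (LinearMap.mul K A x) := by
      refine Submodule.map₂_le.2 fun p hp q hq => ?_
      simpa [mul_assoc] using smP_mem (smP_mem hx hp) hq
    exact this hz

theorem subPow_mul (I : Submodule K A) (m n : ℕ) :
    smP K (subPow K I m) (subPow K I n) = subPow K I (m + n + 1) := by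
  induction n with
  | zero => rfl
  | succ n ih =>
    change smP K _ (smP K (subPow K I n) I) = smP K (subPow K I (m + n + 1)) I
    rw [← smP_assoc, ih]

theorem subPow_succ_le (n : ℕ) :
    subPow K (⊤ : Submodule K A) (n + 1) ≤ subPow K (⊤ : Submodule K A) n := by
  induction n with
  | zero => exact le_top
  | succ n ih => exact Submodule.map₂_le_map₂ ih le_rfl

theorem exists_fix [FiniteDimensional K A]
    (h : ¬ ∃ n : ℕ, subPow K (⊤ : Submodule K A) n = ⊥) :
    ∃ e a : A, a ≠ 0 ∧ e * a = a := by
  obtain ⟨n, hn⟩ := IsArtinian.monotone_stabilizes (R := K) (M := A)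
    ⟨fun n => OrderDual.toDual (subPow K (⊤ : Submodule K A) n),
      monotone_nat_of_le_succ fun n => subPow_succ_le n⟩
  have hJJ : smP K (subPow K (⊤ : Submodule K A) n) (subPow K ⊤ n) = subPow K ⊤ n := by
    rw [subPow_mul]
    exact (hn (n + n + 1) (by omega)).symm
  have hJ0 : subPow K (⊤ : Submodule K A) n ≠ ⊥ := fun h' => h ⟨n, h'⟩
  generalize subPow K (⊤ : Submodule K A) n = J at hJJ hJ0
  obtain ⟨L, ⟨hL1, hL2⟩, hmin⟩ := WellFounded.has_min
    (wellFounded_lt (α := Submodule K A)) {L | smP K J L ≤ L ∧ smP K J L ≠ ⊥}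
    ⟨J, hJJ.le, by rw [hJJ]; exact hJ0⟩
  obtain ⟨a, haL, j, hj, hja⟩ : ∃ a ∈ L, ∃ j ∈ J, j * a ≠ 0 := by
    by_contra! hc
    exact hL2 (le_bot_iff.1 (Submodule.map₂_le.2 fun x hx y hy => by simpa using hc y hy x hx))
  have h1 : smP K J (smP K J (K ∙ a)) = smP K J (K ∙ a) := by rw [← smP_assoc, hJJ]
  have hle : smP K J (K ∙ a) ≤ L :=
    (Submodule.map₂_le_map₂ le_rfl ((Submodule.span_singleton_le_iff_mem _ _).2 haL)).trans hL1
  have heq : smP K J (K ∙ a) = L := by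
    refine hle.eq_of_not_lt (hmin _ ⟨h1.le, ?_⟩)
    rw [h1]
    intro h0
    have := smP_mem hj (Submodule.mem_span_singleton_self (R := K) a)
    rw [h0] at this
    exact hja (by simpa using this)
  have hm : smP K J (K ∙ a) ≤ J.map ((LinearMap.mul K A).flip a) := by
    refine Submodule.map₂_le.2 fun x hx y hy => ?_
    obtain ⟨c, rfl⟩ := Submodule.mem_span_singleton.1 hy
    exact ⟨c • x, J.smul_mem c hx, by simp⟩
  rw [heq] at hm
  obtain ⟨e, -, he⟩ := hm haL
  exact ⟨e, a, fun h => hja (by simp [h]), by simpa using he⟩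

open Polynomial in
theorem exists_idem_aux0 [FiniteDimensional K A] (e a : A) (ha : a ≠ 0) (h : e * a = a) :
    ∃ g : A, g ≠ 0 ∧ g * g = g := by
  have hfin : Module.Finite K (Unitization K A) := by
    let φ : K × A →ₗ[K] Unitization K A :=
      { toFun := fun p => Unitization.inl p.1 + (p.2 : Unitization K A)
        map_add' := fun p q => by ext <;> simp
        map_smul' := fun c p => by ext <;> simp }
    exact Module.Finite.of_surjective φ fun y => ⟨(y.fst, y.snd), by ext <;> simp [φ]⟩
  set x : Unitization K A := (e : Unitization K A) with hx
  have hi : IsIntegral K x := Algebra.IsIntegral.isIntegral x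
  obtain ⟨k, q, hq, hpq⟩ : ∃ (k : ℕ) (q : K[X]), ¬ X ∣ q ∧ minpoly K x = X ^ k * q := by
    obtain ⟨q, h1, h2⟩ := (FiniteMultiplicity.of_not_isUnit (a := (X : K[X]))
      Polynomial.not_isUnit_X (minpoly.ne_zero hi)).exists_eq_pow_mul_and_not_dvd
    exact ⟨_, q, h2, h1⟩
  obtain ⟨u, v, huv⟩ : IsCoprime ((X : K[X]) ^ (k + 1)) q :=
    ((Polynomial.irreducible_X.coprime_iff_not_dvd).2 hq).pow_left
  have hp0 : aeval x (X ^ k * q) = 0 := by rw [← hpq]; exact minpoly.aeval K x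
  set f := aeval x (u * X ^ (k + 1)) with hf
  have hff : f * f = f := by
    have e1 : u * X ^ (k + 1) * (u * X ^ (k + 1)) =
        u * X ^ (k + 1) - (u * X * v) * (X ^ k * q) := by
      linear_combination (u * X ^ (k + 1)) * huv
    rw [hf, ← map_mul, e1, map_sub, map_mul _ _ (X ^ k * q), hp0, mul_zero, sub_zero]
  have hfst : f.fst = 0 := by
    rw [hf, pow_succ, ← mul_assoc, map_mul, aeval_X]
    simp [hx]
  have hf0 : f ≠ 0 := by
    intro h0
    have hxk : x ^ k = 0 := by
      have e1 : (X : K[X]) ^ k = X ^ k * (u * X ^ (k + 1)) + v * (X ^ k * q) := by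
        linear_combination (-(X : K[X]) ^ k) * huv
      have := congrArg (aeval x) e1
      rw [map_add, map_mul, map_mul _ v, hp0, ← hf, h0] at this
      simpa using this
    have hk : ∀ k : ℕ, x ^ k * (a : Unitization K A) = a := by
      intro k
      induction k with
      | zero => simp
      | succ k ih => rw [pow_succ, mul_assoc, hx, ← Unitization.inr_mul, h, ← hx, ih]
    have := hk k
    rw [hxk, zero_mul] at this
    exact ha (Unitization.inr_injective (R := K) (by simpa using this.symm))
  have hg : f = (f.snd : Unitization K A) := by
    ext <;> simp [hfst]
  refine ⟨f.snd, fun h0 => hf0 (by rw [hg, h0]; simp), ?_⟩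
  apply Unitization.inr_injective (R := K)
  rw [Unitization.inr_mul, ← hg, hff]

end aux

theorem stmt0 {K A : Type*} [Field K] [NonUnitalRing A] [Module K A]
    [SMulCommClass K A A] [IsScalarTower K A A] [FiniteDimensional K A]
    (hnotnil : ¬ ∃ n : ℕ, subPow K (⊤ : Submodule K A) n = ⊥) :
    ∃ a : A, a ≠ 0 ∧ a * a = a := by
  obtain ⟨e, a, ha, h⟩ := exists_fix hnotnil
  exact exists_idem_aux0 (K := K) e a ha h
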